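/- Let f(x) = ∑_{j=0}^m C(m,j) c_j x^j ∈ ℚ[x] be an irreducible polynomial of degree m, where C(m,j) is the binomial coefficient. Suppose there is a prime p with m/2 < p < m - 2 such that: (i) ν_p(c_j) ≥ 0 for j = 0, 1, …, m; (ii) ν_p(c_0) = 1; (iii) ν_p(c_j) ≥ 1 for 0 ≤ j ≤ m - p; and (iv) ν_p(c_p) = 0. Then the Galois group of f over ℚ contains the alternating group A_m (i.e., the image of the Galois group acting on the m roots of f contains all even permutations of the roots). Moreover, the Galois group is isomorphic to A_m if the discriminant of f is a square of a nonzero rational number, and is isomorphic to S_m otherwise. -/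

import Mathlib

open Polynomial Finset

/-- The discriminant of a polynomial `f ∈ ℚ[x]`, computed in its splitting field as
`lc(f)^(2m-2) ∏_{i<j} (rᵢ - rⱼ)²` over the roots `r₀, …, r_{m-1}` of `f` (with
multiplicity), where `m = deg f`. -/
noncomputable def polyDisc (f : Polynomial ℚ) : f.SplittingField :=
  (algebraMap ℚ f.SplittingField f.leadingCoeff) ^ (2 * f.natDegree - 2) *
    ∏ i ∈ Finset.range f.natDegree, ∏ j ∈ Finset.range f.natDegree,
      if i < j then
        (((f.map (algebraMap ℚ f.SplittingField)).roots.toList.getD i 0) -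
            ((f.map (algebraMap ℚ f.SplittingField)).roots.toList.getD j 0)) ^ 2
      else 1

/-!
The Newton polygon of `f` at `p` starts with the segment from `(0, 1)` to `(p, 0)`, so some root of
`f` has `p`-adic valuation `1 / p`. Hence `p` divides a ramification index of the splitting field,
and therefore the order of the Galois group. As `p ≤ m < 2 * p`, an element of order `p` is a
`p`-cycle, which makes the transitive Galois group primitive, and since `p + 3 ≤ m` Jordan's theorem
gives `A_m`. Finally, an element of the Galois group multiplies the square root
`lc(f)^(m-1) ∏_{i<j} (rⱼ - rᵢ)` of the discriminant by the sign of the permutation it induces.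
-/

section PermutationGroups

open Equiv Equiv.Perm MulAction
open scoped commutatorElement

theorem exists_conj_mem_zpowers_of_not_sq_dvd_card {G : Type*} [Group G] [Finite G] {p : ℕ}
    [hp : Fact p.Prime] (hcard : ¬ p ^ 2 ∣ Nat.card G) {x y : G} (hx : orderOf x = p)
    (hy : orderOf y = p) : ∃ u : G, u * y * u⁻¹ ∈ Subgroup.zpowers x := by
  have hfac : (Nat.card G).factorization p = 1 := by
    have hlt := mt (hp.out.pow_dvd_iff_le_factorization Nat.card_pos.ne').2 hcard
    have hpos := (hp.out.dvd_iff_one_le_factorization Nat.card_pos.ne').1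
      (hx ▸ orderOf_dvd_natCard x)
    lia
  have hsyl : ∀ {z : G}, orderOf z = p →
      Nat.card (Subgroup.zpowers z) = p ^ (Nat.card G).factorization p := fun hz => by
    rw [Nat.card_zpowers, hz, hfac, pow_one]
  obtain ⟨u, hu⟩ := MulAction.exists_smul_eq G
    (Sylow.ofCard (Subgroup.zpowers y) (hsyl hy)) (Sylow.ofCard (Subgroup.zpowers x) (hsyl hx))
  refine ⟨u, ?_⟩
  change u * y * u⁻¹ ∈ (Sylow.ofCard (Subgroup.zpowers x) (hsyl hx) : Subgroup G)
  rw [← hu, Sylow.coe_subgroup_smul]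
  exact Subgroup.smul_mem_pointwise_smul y (MulAut.conj u) _ (Subgroup.mem_zpowers y)

theorem commute_commutatorElement_of_conj_mem_zpowers {G : Type*} [Group G] {g x y : G}
    (hx : x⁻¹ * g * x ∈ Subgroup.zpowers g) (hy : y⁻¹ * g * y ∈ Subgroup.zpowers g) :
    Commute ⁅x, y⁆ g := by
  obtain ⟨i, hi⟩ := Subgroup.mem_zpowers_iff.1 hx
  obtain ⟨j, hj⟩ := Subgroup.mem_zpowers_iff.1 hy
  have hconj (z : G) (n : ℤ) : z⁻¹ * g ^ n * z = (z⁻¹ * g * z) ^ n := by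
    simpa using (conj_zpow (a := z⁻¹) (b := g) (i := n)).symm
  have hxy : (x * y)⁻¹ * g * (x * y) = (y * x)⁻¹ * g * (y * x) := by
    calc (x * y)⁻¹ * g * (x * y) = y⁻¹ * (x⁻¹ * g * x) * y := by group
      _ = g ^ (j * i) := by rw [← hi, hconj, ← hj, ← zpow_mul]
      _ = x⁻¹ * (y⁻¹ * g * y) * x := by rw [mul_comm, ← hj, hconj, ← hi, ← zpow_mul]
      _ = (y * x)⁻¹ * g * (y * x) := by group
  calc ⁅x, y⁆ * g = x * y * ((y * x)⁻¹ * g * (y * x)) * (y * x)⁻¹ := by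
        rw [commutatorElement_def]; group
    _ = x * y * ((x * y)⁻¹ * g * (x * y)) * (y * x)⁻¹ := by rw [hxy]
    _ = g * ⁅x, y⁆ := by rw [commutatorElement_def]; group

theorem commutatorElement_mul_mul {G : Type*} [Group G] {k l x y : G} (hkx : Commute k x)
    (hky : Commute k y) (hlx : Commute l x) (hly : Commute l y) :
    ⁅k * x, l * y⁆ = ⁅k, l⁆ * ⁅x, y⁆ := by
  have hcomm {a b : G} : ⁅a, b⁆ = a * b * (b * a)⁻¹ := by rw [commutatorElement_def]; group
  have hlk : Commute (l * k)⁻¹ (x * y * (y * x)⁻¹) :=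
    (((hlx.mul_left hkx).mul_right (hly.mul_left hky)).mul_right
      ((hly.mul_left hky).mul_right (hlx.mul_left hkx)).inv_right).inv_left
  calc ⁅k * x, l * y⁆ = k * x * (l * y) * (l * y * (k * x))⁻¹ := hcomm
    _ = k * l * (x * y * (y * x)⁻¹ * (l * k)⁻¹) := by
      rw [hlx.symm.mul_mul_mul_comm, hky.symm.mul_mul_mul_comm]; group
    _ = k * l * (l * k)⁻¹ * (x * y * (y * x)⁻¹) := by rw [← hlk.eq]; group
    _ = ⁅k, l⁆ * ⁅x, y⁆ := by rw [← hcomm, ← hcomm]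

theorem not_sq_dvd_factorial {p n : ℕ} (hp : p.Prime) (hn : n < 2 * p) : ¬ p ^ 2 ∣ n.factorial := by
  have hlog : Nat.log p n < 2 := Nat.log_lt_of_lt_pow' two_ne_zero (by nlinarith [hp.two_le])
  rw [hp.pow_dvd_factorial_iff hlog]
  simpa using (Nat.div_lt_iff_lt_mul hp.pos).2 hn

theorem exists_mem_eqOn_of_isMultiplyPretransitive {α : Type*} {G : Subgroup (Perm α)}
    {s : Finset α} (hG : IsMultiplyPretransitive G α #s) (τ : Perm α) :
    ∃ n ∈ G, Set.EqOn n τ s := by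
  let x : Fin #s ↪ α := s.equivFin.symm.toEmbedding.trans (Function.Embedding.subtype _)
  obtain ⟨n, hn⟩ := MulAction.exists_smul_eq G x (x.trans τ.toEmbedding)
  refine ⟨n, n.2, fun z hz => ?_⟩
  simpa [x, Subgroup.smul_def] using DFunLike.congr_fun hn (s.equivFin ⟨z, hz⟩)

section Jordan

variable {α : Type*} [Fintype α] [DecidableEq α] {G : Subgroup (Perm α)} {p : ℕ} {g : Perm α}

theorem exists_mem_conj_mem_zpowers {s : Finset α} (hp : p.Prime) (hs : #s < 2 * p) {x y : Perm α}
    (hx : x ∈ G) (hy : y ∈ G) (hxs : x.support ⊆ s) (hys : y.support ⊆ s)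
    (hxp : orderOf x = p) (hyp : orderOf y = p) :
    ∃ u ∈ G, u.support ⊆ s ∧ u * y * u⁻¹ ∈ Subgroup.zpowers x := by
  have := Fact.mk hp
  let ι : Perm s →* Perm α := ofSubtype
  have hrange : ∀ z : Perm α, z.support ⊆ s ↔ z ∈ ι.range := fun z =>
    Finset.coe_subset.symm.trans mem_range_ofSubtype_iff.symm
  obtain ⟨x, rfl⟩ := (hrange x).1 hxs
  obtain ⟨y, rfl⟩ := (hrange y).1 hys
  have hcard : ¬ p ^ 2 ∣ Nat.card (G.comap ι) := fun h =>
    not_sq_dvd_factorial hp hs (by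
      simpa [Fintype.card_perm] using h.trans (Subgroup.card_subgroup_dvd_card _))
  have hι : Function.Injective ι := ofSubtype_injective
  rw [orderOf_injective ι hι] at hxp hyp
  let x' : G.comap ι := ⟨x, hx⟩
  let y' : G.comap ι := ⟨y, hy⟩
  obtain ⟨⟨u, hu⟩, k, hk⟩ := exists_conj_mem_zpowers_of_not_sq_dvd_card hcard
    (x := x') (y := y') ((Subgroup.orderOf_coe x').symm.trans hxp)
    ((Subgroup.orderOf_coe y').symm.trans hyp)
  refine ⟨ι u, hu, (hrange _).2 ⟨u, rfl⟩, k, ?_⟩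
  have hk' := congrArg (fun z : G.comap ι => ι z) hk
  simpa [x', y'] using hk'

theorem mem_zpowers_of_commute_of_support_subset (hg : g.IsCycle) {h : Perm α}
    (hcomm : Commute h g) (hsupp : h.support ⊆ g.support) : h ∈ Subgroup.zpowers g := by
  obtain ⟨hinv, hmem⟩ := hg.commute_iff.1 hcomm
  rwa [ofSubtype_subtypePerm hinv fun x hx => hsupp (mem_support.2 hx)] at hmem

theorem isPreprimitive_ofFixingSubgroup_of_isCycle_mem (hp : (#g.support).Prime) (hg : g.IsCycle)
    (hgG : g ∈ G) :
    IsPreprimitive (fixingSubgroup G (g.support : Set α)ᶜ)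
      (SubMulAction.ofFixingSubgroup G (g.support : Set α)ᶜ) := by
  have := isPretransitive_of_isCycle_mem hg hgG
  have hcarrier : (SubMulAction.ofFixingSubgroup G (g.support : Set α)ᶜ : Set α) = g.support :=
    compl_compl _
  refine IsPreprimitive.of_prime_card ?_
  rwa [← SetLike.coe_sort_coe, hcarrier, Nat.card_coe_set_eq, Set.ncard_coe_finset]

theorem isPreprimitive_of_isPretransitive_of_isCycle_mem (hG : IsPretransitive G α)
    (hp : (#g.support).Prime) (hcard : Nat.card α < 2 * #g.support) (hg : g.IsCycle) (hgG : g ∈ G) :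
    IsPreprimitive G α := by
  have := isPreprimitive_ofFixingSubgroup_of_isCycle_mem hp hg hgG
  let incl : SubMulAction.ofFixingSubgroup G (g.support : Set α)ᶜ
      →ₑ[(fixingSubgroup G (g.support : Set α)ᶜ).subtype] α :=
    { toFun := Subtype.val, map_smul' := fun _ _ => rfl }
  have hrange : Set.range incl = g.support := Subtype.range_coe.trans (compl_compl _)
  refine IsPreprimitive.of_card_lt (f := incl) ?_
  rwa [hrange, Set.ncard_coe_finset]

theorem isMultiplyPretransitive_card_compl_support (hG : IsPreprimitive G α)
    (hp : (#g.support).Prime) (hg : g.IsCycle) (hgG : g ∈ G) :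
    IsMultiplyPretransitive G α #g.supportᶜ := by
  have hcard : #g.support + #g.supportᶜ = Nat.card α := by
    rw [card_add_card_compl, Nat.card_eq_fintype_card]
  have htwo := hp.two_le
  obtain hzero | hpos := (#g.supportᶜ).eq_zero_or_pos
  · rw [hzero]
    exact is_zero_pretransitive'
  obtain ⟨k, hk⟩ := Nat.exists_eq_add_one.2 hpos
  have hk' : ((g.support : Set α)ᶜ).ncard = k + 1 := by
    rw [← coe_compl, Set.ncard_coe_finset, hk]
  have hmult : IsMultiplyPretransitive G α (k + 2) :=
    (hG.isMultiplyPreprimitive hk' (by lia)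
      (isPreprimitive_ofFixingSubgroup_of_isCycle_mem hp hg hgG)).isMultiplyPretransitive
  rw [hk]
  exact isMultiplyPretransitive_of_le (n := k + 2) (by lia) (by lia)

theorem notMem_support_apply_of_disjoint {τ : Perm α} (hτ : Perm.Disjoint g τ) {z : α}
    (hz : z ∉ g.support) : τ z ∉ g.support := by
  rw [notMem_support] at hz ⊢
  rw [← mul_apply, hτ.commute.eq, mul_apply, hz]

theorem support_inv_mul_mul_subset {n τ : Perm α} (hτ : Perm.Disjoint g τ)
    (hn : Set.EqOn n τ (g.supportᶜ : Finset α)) : (n⁻¹ * g * n).support ⊆ g.support := by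
  intro z
  contrapose!
  intro hz
  have hnz : n z ∉ g.support := by
    rw [hn (by simpa using hz)]
    exact notMem_support_apply_of_disjoint hτ hz
  simp [notMem_support.1 hnz]

-- Frattini: the Sylow `#g.support`-subgroups of the elements of `G` supported on `g.support` are
-- conjugate, so any `n ∈ G` agreeing with `τ` off `g.support` can be corrected to normalize them.
theorem exists_mul_mem_conj_mem_zpowers_of_disjoint (hG : IsPreprimitive G α)
    (hp : (#g.support).Prime) (hg : g.IsCycle) (hgG : g ∈ G) {τ : Perm α}
    (hτ : Perm.Disjoint g τ) :
    ∃ k : Perm α, k.support ⊆ g.support ∧ k * τ ∈ G ∧ k⁻¹ * g * k ∈ Subgroup.zpowers g := by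
  obtain ⟨n, hnG, hn⟩ := exists_mem_eqOn_of_isMultiplyPretransitive
    (isMultiplyPretransitive_card_compl_support hG hp hg hgG) τ
  have horder : orderOf (n⁻¹ * g * n) = #g.support := by
    rw [← hg.orderOf]
    simpa using (MulAut.conj n⁻¹).orderOf_eq g
  obtain ⟨u, huG, hu, j, hj⟩ := exists_mem_conj_mem_zpowers hp (by have := hp.pos; lia) hgG
    (G.mul_mem (G.mul_mem (G.inv_mem hnG) hgG) hnG) subset_rfl
    (support_inv_mul_mul_subset hτ hn) hg.orderOf horder
  refine ⟨n * u⁻¹ * τ⁻¹, fun z => ?_, ?_, ?_⟩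
  · contrapose!
    intro hz
    have hτz : τ⁻¹ z ∉ g.support :=
      notMem_support_apply_of_disjoint hτ.inv_right hz
    have huz : u⁻¹ (τ⁻¹ z) = τ⁻¹ z := by
      rw [← notMem_support, support_inv]
      exact fun h => hτz (hu h)
    rw [notMem_support, mul_apply, mul_apply, huz, hn (by simpa using hτz), ← mul_apply,
      mul_inv_cancel, one_apply]
  · simpa using G.mul_mem hnG (G.inv_mem huG)
  · refine ⟨j, ?_⟩
    calc g ^ j = τ * g ^ j * τ⁻¹ := by rw [← (hτ.commute.zpow_left j).eq, mul_inv_cancel_right]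
      _ = τ * (u * (n⁻¹ * g * n) * u⁻¹) * τ⁻¹ := congrArg (τ * · * τ⁻¹) hj
      _ = (n * u⁻¹ * τ⁻¹)⁻¹ * g * (n * u⁻¹ * τ⁻¹) := by group

theorem commutatorElement_mem_of_disjoint (hG : IsPreprimitive G α)
    (hp : (#g.support).Prime) (hg : g.IsCycle) (hgG : g ∈ G) {σ τ : Perm α}
    (hσ : Perm.Disjoint g σ) (hτ : Perm.Disjoint g τ) : ⁅σ, τ⁆ ∈ G := by
  obtain ⟨k, hk, hkσ, hk_norm⟩ := exists_mul_mem_conj_mem_zpowers_of_disjoint hG hp hg hgG hσ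
  obtain ⟨l, hl, hlτ, hl_norm⟩ := exists_mul_mem_conj_mem_zpowers_of_disjoint hG hp hg hgG hτ
  have hdisj {a b : Perm α} (ha : a.support ⊆ g.support) (hb : Perm.Disjoint g b) : Commute a b :=
    (hb.mono ha subset_rfl).commute
  have hsplit : ⁅k * σ, l * τ⁆ = ⁅k, l⁆ * ⁅σ, τ⁆ :=
    commutatorElement_mul_mul (hdisj hk hσ) (hdisj hk hτ) (hdisj hl hσ) (hdisj hl hτ)
  have hsupp : (⁅k, l⁆).support ⊆ g.support := by
    intro z
    contrapose!
    intro hz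
    have hfix {a : Perm α} (ha : a.support ⊆ g.support) : a z = z :=
      notMem_support.1 fun h => hz (ha h)
    have hkz := hfix hk
    have hlz := hfix hl
    have hkz' := hfix (a := k⁻¹) (by rwa [support_inv])
    have hlz' := hfix (a := l⁻¹) (by rwa [support_inv])
    rw [notMem_support, commutatorElement_def, mul_apply, mul_apply, mul_apply, hlz', hkz', hlz,
      hkz]
  have hpow : ⁅k, l⁆ ∈ Subgroup.zpowers g := mem_zpowers_of_commute_of_support_subset hg
    (commute_commutatorElement_of_conj_mem_zpowers hk_norm hl_norm) hsupp
  have hmem : ⁅k * σ, l * τ⁆ ∈ G :=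
    G.mul_mem (G.mul_mem (G.mul_mem hkσ hlτ) (G.inv_mem hkσ)) (G.inv_mem hlτ)
  rw [hsplit] at hmem
  exact (G.mul_mem_cancel_left (Subgroup.zpowers_le.2 hgG hpow)).1 hmem

theorem alternatingGroup_le_of_isPreprimitive_of_isCycle_mem (hG : IsPreprimitive G α)
    (hp : (#g.support).Prime) (hcard : #g.support + 3 ≤ Nat.card α) (hg : g.IsCycle)
    (hgG : g ∈ G) : alternatingGroup α ≤ G := by
  have hcompl : 2 < #g.supportᶜ := by
    rw [card_compl, ← Nat.card_eq_fintype_card]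
    lia
  obtain ⟨a, b, c, ha, hb, hc, hab, hac, hbc⟩ := two_lt_card_iff.1 hcompl
  rw [mem_compl] at ha hb hc
  have hdisj {x y : α} (hx : x ∉ g.support) (hy : y ∉ g.support) : Perm.Disjoint g (swap x y) := by
    intro z
    by_cases hz : z ∈ g.support
    · exact .inr (swap_apply_of_ne_of_ne (fun h => hx (h ▸ hz)) (fun h => hy (h ▸ hz)))
    · exact .inl (notMem_support.1 hz)
  have hcomm : ⁅swap a b, swap a c⁆ = swap a b * swap a c * (swap a b * swap a c) := by
    simp [commutatorElement_def, mul_assoc]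
  refine alternatingGroup_le_of_isPreprimitive_of_isThreeCycle_mem hG
    (isThreeCycle_swap_mul_swap_same hab hac hbc).isThreeCycle_sq ?_
  rw [← hcomm]
  exact commutatorElement_mem_of_disjoint hG hp hg hgG (hdisj ha hb) (hdisj ha hc)

theorem alternatingGroup_le_of_isPretransitive_of_prime_dvd_card (hG : IsPretransitive G α)
    (hp : p.Prime) (hcard : p + 3 ≤ Nat.card α) (hcard' : Nat.card α < 2 * p)
    (hdvd : p ∣ Nat.card G) : alternatingGroup α ≤ G := by
  have := Fact.mk hp
  obtain ⟨g, hgp⟩ := exists_prime_orderOf_dvd_card' p hdvd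
  rw [← Subgroup.orderOf_coe] at hgp
  have hg : (g : Perm α).IsCycle := isCycle_of_prime_order' (hgp ▸ hp)
    (by rwa [hgp, ← Nat.card_eq_fintype_card])
  obtain rfl : #(g : Perm α).support = p := hg.orderOf.symm.trans hgp
  exact alternatingGroup_le_of_isPreprimitive_of_isCycle_mem
    (isPreprimitive_of_isPretransitive_of_isCycle_mem hG hp hcard' hg g.2) hp hcard hg g.2

theorem eq_top_of_alternatingGroup_le (hG : alternatingGroup α ≤ G)
    (hG' : ¬ G ≤ alternatingGroup α) : G = ⊤ := by
  obtain ⟨τ, hτG, hτ⟩ := SetLike.not_le_iff_exists.1 hG'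
  rw [mem_alternatingGroup] at hτ
  refine (Subgroup.eq_top_iff' G).2 fun σ => ?_
  by_cases hσ : sign σ = 1
  · exact hG (mem_alternatingGroup.2 hσ)
  · refine (G.mul_mem_cancel_right hτG).1 (hG (mem_alternatingGroup.2 ?_))
    rw [map_mul, (Int.units_eq_one_or _).resolve_left hσ, (Int.units_eq_one_or _).resolve_left hτ]
    rfl

end Jordan

end PermutationGroups

section Valuations

open IsDedekindDomain WithZero

theorem exists_ne_le_of_sum_eq_zero {R Γ₀ ι : Type*} [Ring R] [LinearOrderedCommGroupWithZero Γ₀]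
    (v : Valuation R Γ₀) {s : Finset ι} {t : ι → R} (hsum : ∑ i ∈ s, t i = 0) {i : ι} (hi : i ∈ s)
    (hti : v (t i) ≠ 0) : ∃ j ∈ s, j ≠ i ∧ v (t i) ≤ v (t j) := by
  by_contra! hlt
  refine hti ?_
  classical
  have hdominant : ∀ j ∈ s \ {i}, v (t j) < v (t i) := fun j hj =>
    hlt j (mem_sdiff.1 hj).1 (notMem_singleton.1 (mem_sdiff.1 hj).2)
  rw [← v.map_sum_eq_of_lt hi hdominant, hsum, map_zero]

section NewtonPolygon

variable {K L Γ₀ : Type*} [Field K] [Field L] [LinearOrderedCommGroupWithZero Γ₀]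

/-- A sufficient condition for the Newton polygon of `f` at `v` to start with the segment joining
`(0, ν(f₀))` to `(d, 0)`: all coefficients are integral, `f_d` is a unit, and the `fⱼ` with `j < d`
have valuation at least `ν(f₀) > 0`. -/
structure HasInitialEdge (v : Valuation K Γ₀) (f : K[X]) (d : ℕ) : Prop where
  coeff_zero_ne_zero : f.coeff 0 ≠ 0
  coeff_zero_lt_one : v (f.coeff 0) < 1
  coeff_le_coeff_zero : ∀ j < d, v (f.coeff j) ≤ v (f.coeff 0)
  coeff_eq_one : v (f.coeff d) = 1
  coeff_le_one : ∀ j, v (f.coeff j) ≤ 1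

namespace HasInitialEdge

variable {v : Valuation K Γ₀} {f : K[X]} {d : ℕ}

theorem map [Algebra K L] (h : HasInitialEdge v f d) {w : Valuation L Γ₀} {e : ℕ} (he : e ≠ 0)
    (hw : ∀ x : K, w (algebraMap K L x) = v x ^ e) :
    HasInitialEdge w (f.map (algebraMap K L)) d where
  coeff_zero_ne_zero := by simpa using h.coeff_zero_ne_zero
  coeff_zero_lt_one := by
    rw [coeff_map, hw]
    exact pow_lt_one₀ zero_le h.coeff_zero_lt_one he
  coeff_le_coeff_zero j hj := by
    rw [coeff_map, coeff_map, hw, hw]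
    exact pow_le_pow_left₀ zero_le (h.coeff_le_coeff_zero j hj) e
  coeff_eq_one := by rw [coeff_map, hw, h.coeff_eq_one, one_pow]
  coeff_le_one j := by
    rw [coeff_map, hw]
    exact pow_le_one₀ zero_le (h.coeff_le_one j)

theorem valuation_root_pow (h : HasInitialEdge v f d) {a : K} (hroot : f.IsRoot a)
    (ha : v a < 1) : v a ^ d = v (f.coeff 0) := by
  have hf₀ : v (f.coeff 0) ≠ 0 := v.ne_zero_iff.2 h.coeff_zero_ne_zero
  have ha₀ : v a ≠ 0 := by
    rintro hva
    rw [v.zero_iff.1 hva, IsRoot, ← coeff_zero_eq_eval_zero] at hroot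
    exact h.coeff_zero_ne_zero hroot
  have hsum : ∑ j ∈ range (f.natDegree + 1), f.coeff j * a ^ j = 0 :=
    eval_eq_sum_range (p := f) a ▸ hroot
  have hlow {j : ℕ} (hj : j < d) : v (f.coeff j * a ^ j) ≤ v (f.coeff 0) * v a ^ j := by
    rw [map_mul, map_pow]
    exact mul_le_mul_left (h.coeff_le_coeff_zero j hj) _
  have hhigh (j : ℕ) : v (f.coeff j * a ^ j) ≤ v a ^ j := by
    rw [map_mul, map_pow]
    exact mul_le_of_le_one_left' (h.coeff_le_one j)
  have hd : v (f.coeff d * a ^ d) = v a ^ d := by rw [map_mul, map_pow, h.coeff_eq_one, one_mul]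
  have hdmem : d ∈ range (f.natDegree + 1) := mem_range_succ_iff.2 <|
    le_natDegree_of_ne_zero (v.ne_zero_iff.1 (h.coeff_eq_one ▸ one_ne_zero))
  apply le_antisymm
  · obtain ⟨j, -, hjd, hle⟩ := exists_ne_le_of_sum_eq_zero v hsum hdmem (hd ▸ pow_ne_zero d ha₀)
    rw [hd] at hle
    obtain hj | hj := hjd.lt_or_gt
    · exact (hle.trans (hlow hj)).trans (mul_le_of_le_one_right' (pow_le_one₀ zero_le ha.le))
    · exact absurd (hle.trans (hhigh j))
        (pow_lt_pow_right_of_lt_one₀ (zero_lt_iff.2 ha₀) ha hj).not_ge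
  · obtain ⟨j, -, hj0, hle⟩ := exists_ne_le_of_sum_eq_zero v hsum (i := 0) (by simp)
      (by simpa using h.coeff_zero_ne_zero)
    rw [pow_zero, mul_one] at hle
    obtain hj | hj := lt_or_ge j d
    · refine absurd (hle.trans (hlow hj)) (not_le.2 ?_)
      exact mul_lt_of_lt_one_right (zero_lt_iff.2 hf₀) (pow_lt_one₀ zero_le ha hj0)
    · exact (hle.trans (hhigh j)).trans (pow_le_pow_right_of_le_one' ha.le hj)

end HasInitialEdge

theorem valuation_coeff_le_coeff_zero (v : Valuation K Γ₀) {f : K[X]} (hf : f.Splits)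
    (hroots : ∀ a ∈ f.roots, 1 ≤ v a) (j : ℕ) : v (f.coeff j) ≤ v (f.coeff 0) := by
  rw [hf.eq_prod_roots]
  generalize f.roots = s at hroots ⊢
  induction s using Multiset.induction_on generalizing j with
  | empty => cases j <;> simp [coeff_C]
  | cons a s ih =>
    have ih := fun j => ih j fun b hb => hroots b (Multiset.mem_cons_of_mem hb)
    have ha := hroots a (Multiset.mem_cons_self a s)
    rw [Multiset.map_cons, Multiset.prod_cons, mul_left_comm]
    set g := C f.leadingCoeff * (s.map fun a => X - C a).prod
    have hzero : v (((X - C a) * g).coeff 0) = v a * v (g.coeff 0) := by simp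
    cases j with
    | zero => rfl
    | succ j =>
      rw [hzero, sub_mul, coeff_sub, coeff_X_mul, coeff_C_mul (p := g)]
      refine (v.map_sub _ _).trans (max_le ((ih j).trans (le_mul_of_one_le_left' ha)) ?_)
      rw [map_mul]
      exact mul_le_mul_right (ih _) _

theorem HasInitialEdge.exists_valuation_pow_eq {v : Valuation K Γ₀} {f : K[X]} {d : ℕ}
    (h : HasInitialEdge v f d) (hf : f.Splits) : ∃ a : K, v a ^ d = v (f.coeff 0) := by
  have hex : ∃ a ∈ f.roots, v a < 1 := by
    by_contra! hroots
    exact h.coeff_zero_lt_one.not_ge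
      (h.coeff_eq_one ▸ valuation_coeff_le_coeff_zero v hf hroots d)
  obtain ⟨a, haf, ha⟩ := hex
  exact ⟨a, h.valuation_root_pow (isRoot_of_mem_roots haf) ha⟩

end NewtonPolygon

section Dedekind

variable {A K L : Type*} [CommRing A] [IsDedekindDomain A] [Field K] [Algebra A K]
  [IsFractionRing A K] [Field L] [Algebra K L] [FiniteDimensional K L] [IsGalois K L]
  [Algebra A L] [IsScalarTower A K L]

variable (L) in
theorem exists_valuation_algebraMap_eq_pow (v : HeightOneSpectrum A) :
    ∃ (w : Valuation L ℤᵐ⁰) (e : ℕ), e ∣ Nat.card (L ≃ₐ[K] L) ∧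
      ∀ x : K, w (algebraMap K L x) = v.valuation K x ^ e := by
  let B := integralClosure A L
  have : IsFractionRing B L := integralClosure.isFractionRing_of_finite_extension K L
  have : IsDedekindDomain B := integralClosure.isDedekindDomain A K L
  have : FaithfulSMul A L := (faithfulSMul_iff_algebraMap_injective A L).2 <| by
    rw [IsScalarTower.algebraMap_eq A K L]
    exact (algebraMap K L).injective.comp (IsFractionRing.injective A K)
  have : Module.Finite A B := IsIntegralClosure.finite A K L B
  have : IsGaloisGroup (L ≃ₐ[K] L) A B := .of_isFractionRing _ A B K L
  obtain ⟨P, hPm, hPo⟩ := Ideal.exists_maximal_ideal_liesOver_of_isIntegral (S := B) v.asIdeal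
  let w : HeightOneSpectrum B := ⟨P, hPm.isPrime, Ideal.ne_bot_of_liesOver_of_ne_bot v.ne_bot P⟩
  have : w.asIdeal.LiesOver v.asIdeal := hPo
  refine ⟨w.valuation L, v.asIdeal.ramificationIdx' w.asIdeal, ?_, fun x =>
    (HeightOneSpectrum.valuation_liesOver L v w x).symm⟩
  rw [Ideal.ramificationIdx'_eq_ramificationIdx _ _ v.ne_bot,
    ← Ideal.ramificationIdxIn_eq_ramificationIdx v.asIdeal w.asIdeal (L ≃ₐ[K] L),
    ← Ideal.ncard_primesOver_mul_ramificationIdxIn_mul_inertiaDegIn v.asIdeal B (L ≃ₐ[K] L)]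
  exact dvd_mul_of_dvd_right (dvd_mul_right _ _) _

theorem HasInitialEdge.dvd_natCard_algEquiv {v : HeightOneSpectrum A} {f : K[X]} {d : ℕ}
    (h : HasInitialEdge (v.valuation K) f d) (hf : (f.map (algebraMap K L)).Splits)
    (hcop : IsCoprime (d : ℤ) (log (v.valuation K (f.coeff 0)))) : d ∣ Nat.card (L ≃ₐ[K] L) := by
  obtain ⟨w, e, he, hw⟩ := exists_valuation_algebraMap_eq_pow (K := K) L v
  have he₀ : e ≠ 0 := ne_zero_of_dvd_ne_zero Nat.card_pos.ne' he
  obtain ⟨a, ha⟩ := (h.map he₀ hw).exists_valuation_pow_eq hf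
  have hlog : (d : ℤ) * log (w a) = e * log (v.valuation K (f.coeff 0)) := by
    simpa [hw] using congrArg log ha
  have hde : (d : ℤ) ∣ e := hcop.dvd_of_dvd_mul_right ⟨_, hlog.symm⟩
  exact (Int.natCast_dvd_natCast.1 hde).trans he

end Dedekind

section Padic

variable {p : ℕ} [Fact p.Prime]

theorem valuation_eq_padicValuation {v : HeightOneSpectrum ℤ}
    (hv : v.asIdeal = Ideal.span {(p : ℤ)}) : v.valuation ℚ = Rat.padicValuation p := by
  have hp : (p : ℤ) ≠ 0 := Nat.cast_ne_zero.2 (Fact.out : p.Prime).ne_zero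
  have hself : v.valuation ℚ p = exp (-1) := by
    simpa using (v.valuation_of_algebraMap (K := ℚ) p).trans (v.intValuation_singleton hp hv)
  have hequiv : (v.valuation ℚ).IsEquiv (Rat.padicValuation p) := by
    refine Valuation.isEquiv_iff_val_le_one.2 fun {x} => ?_
    rw [Rat.valuation_le_one_iff_den, Rat.padicValuation_le_one_iff, hv, Ideal.mem_span_singleton,
      Int.natCast_dvd_natCast]
  ext x
  obtain rfl | hx := eq_or_ne x 0
  · simp
  have hpow : Rat.padicValuation p x = Rat.padicValuation p ((p : ℚ) ^ padicValRat p x) := by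
    rw [map_zpow₀, Rat.padicValuation_self, ← exp_zsmul]
    simp [Rat.padicValuation, hx]
  rw [hequiv.eq_iff.2 hpow, hpow]
  simp [hself]

theorem padicValuation_le_exp_iff {x : ℚ} {n : ℤ} :
    Rat.padicValuation p x ≤ exp (-n) ↔ x = 0 ∨ n ≤ padicValRat p x := by
  obtain rfl | hx := eq_or_ne x 0 <;> simp [Rat.padicValuation, *, -exp_neg]

theorem padicValuation_eq_exp_iff {x : ℚ} {n : ℤ} :
    Rat.padicValuation p x = exp (-n) ↔ x ≠ 0 ∧ padicValRat p x = n := by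
  obtain rfl | hx := eq_or_ne x 0
  · simp [exp_ne_zero.symm, -exp_neg]
  · simp [Rat.padicValuation, hx, -exp_neg]

theorem padicValuation_natCast_le_one (n : ℕ) : Rat.padicValuation p n ≤ 1 := by
  rw [← Int.cast_natCast, Rat.padicValuation_cast]
  exact Int.padicValuation_le_one p n

theorem padicValuation_natCast_eq_one_iff {n : ℕ} : Rat.padicValuation p n = 1 ↔ ¬ p ∣ n := by
  rw [← Int.natCast_dvd_natCast, ← Int.padicValuation_eq_one_iff, ← Rat.padicValuation_cast]
  rfl

theorem padicValuation_natCast_le_exp_of_dvd {n : ℕ} (h : p ∣ n) :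
    Rat.padicValuation p n ≤ exp (-1) := by
  obtain ⟨k, rfl⟩ := h
  rw [Nat.cast_mul, map_mul, Rat.padicValuation_self]
  exact mul_le_of_le_one_right' (padicValuation_natCast_le_one k)

theorem not_dvd_choose_self_of_lt_two_mul {m : ℕ} (hpm : p ≤ m) (hm : m < 2 * p) :
    ¬ p ∣ m.choose p := by
  have hdiv : m / p = 1 := Nat.div_eq_of_lt_le (by lia) (by lia)
  have hmod : m.choose p ≡ 1 [MOD p] := by
    simpa [hdiv, (Fact.out : p.Prime).pos] using
      Choose.choose_modEq_choose_mod_mul_choose_div_nat (n := m) (k := p) (p := p)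
  rw [← Nat.modEq_zero_iff_dvd]
  intro h
  have := (Nat.modEq_zero_iff_dvd).1 (hmod.symm.trans h)
  exact (Fact.out : p.Prime).one_lt.ne' (Nat.dvd_one.1 this)

theorem coeff_sum_choose {R : Type*} [Semiring R] (m : ℕ) (c : ℕ → R) (j : ℕ) :
    (∑ i ∈ range (m + 1), C ((m.choose i : R) * c i) * X ^ i).coeff j = m.choose j * c j := by
  simp only [finsetSum_coeff, coeff_C_mul, coeff_X_pow, mul_ite, mul_one, mul_zero, sum_ite_eq,
    mem_range, Nat.lt_succ_iff]
  split_ifs with hj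
  · rfl
  · simp [Nat.choose_eq_zero_of_lt (not_le.1 hj)]

theorem hasInitialEdge_sum_choose {m : ℕ} {c : ℕ → ℚ} (hpm : p ≤ m) (hm : m < 2 * p)
    (hint : ∀ j ≤ m, Rat.padicValuation p (c j) ≤ 1)
    (hzero : Rat.padicValuation p (c 0) = exp (-1))
    (hlow : ∀ j ≤ m - p, Rat.padicValuation p (c j) ≤ exp (-1))
    (hunit : Rat.padicValuation p (c p) = 1) :
    HasInitialEdge (Rat.padicValuation p)
      (∑ j ∈ range (m + 1), C ((m.choose j : ℚ) * c j) * X ^ j) p := by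
  have hcoeff (j : ℕ) : Rat.padicValuation p
      ((∑ j ∈ range (m + 1), C ((m.choose j : ℚ) * c j) * X ^ j).coeff j) =
        Rat.padicValuation p (m.choose j) * Rat.padicValuation p (c j) := by
    rw [coeff_sum_choose, map_mul]
  have hcoeff_zero := (hcoeff 0).trans
    (by rw [Nat.choose_zero_right, Nat.cast_one, map_one, one_mul, hzero])
  have hlt : (exp (-1) : ℤᵐ⁰) < 1 := by
    rw [← exp_zero, exp_lt_exp]
    exact neg_one_lt_zero
  refine ⟨?_, ?_, fun j hj => ?_, ?_, fun j => ?_⟩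
  · rw [← (Rat.padicValuation p).ne_zero_iff, hcoeff_zero]
    exact exp_ne_zero
  · rwa [hcoeff_zero]
  · rw [hcoeff_zero, hcoeff]
    obtain hjm | hjm := le_or_gt j (m - p)
    · exact (mul_le_of_le_one_left' (padicValuation_natCast_le_one _)).trans (hlow j hjm)
    · have hdvd := (Fact.out : p.Prime).dvd_choose (a := j) (b := m) hj (by lia) (by lia)
      exact (mul_le_of_le_one_right' (hint j (by lia))).trans
        (padicValuation_natCast_le_exp_of_dvd hdvd)
  · rw [hcoeff, hunit, mul_one,
      padicValuation_natCast_eq_one_iff.2 (not_dvd_choose_self_of_lt_two_mul hpm hm)]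
  · obtain hjm | hjm := le_or_gt j m
    · rw [hcoeff]
      exact mul_le_one' (padicValuation_natCast_le_one _) (hint j hjm)
    · rw [coeff_sum_choose, Nat.choose_eq_zero_of_lt hjm]
      simp

theorem isGalois_splittingField {F : Type*} [Field F] [PerfectField F] (f : F[X]) :
    IsGalois F f.SplittingField where

theorem HasInitialEdge.dvd_natCard_gal {f : ℚ[X]} {d : ℕ}
    (h : HasInitialEdge (Rat.padicValuation p) f d)
    (hcop : IsCoprime (d : ℤ) (log (Rat.padicValuation p (f.coeff 0)))) : d ∣ Nat.card f.Gal := by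
  have hp : Prime (p : ℤ) := Nat.prime_iff_prime_int.1 Fact.out
  let v : HeightOneSpectrum ℤ := .ofPrime ((Ideal.prime_span_singleton_iff).2 hp)
  have := isGalois_splittingField f
  have hv : v.valuation ℚ = Rat.padicValuation p := valuation_eq_padicValuation rfl
  rw [← hv] at h hcop
  exact h.dvd_natCard_algEquiv (SplittingField.splits f) hcop

end Padic

end Valuations

section Discriminant

variable {F E : Type*} [Field F] [Field E] [Algebra F E] {f : F[X]} {m : ℕ}

/-- The square root `lc(f)^(m-1) ∏_{i<j} (rⱼ - rᵢ)` of the discriminant of `f`, as a Vandermonde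
determinant in an enumeration `r` of the roots of `f` (assumed to be `m = deg f` in number). -/
noncomputable def discSqrt (f : F[X]) (r : Fin m ≃ f.rootSet E) : E :=
  algebraMap F E f.leadingCoeff ^ (m - 1) * (Matrix.vandermonde fun i => (r i : E)).det

theorem discSqrt_ne_zero (hf : f ≠ 0) (r : Fin m ≃ f.rootSet E) : discSqrt f r ≠ 0 := by
  refine mul_ne_zero (pow_ne_zero _ ?_) ?_
  · simpa using hf
  · exact Matrix.det_vandermonde_ne_zero_iff.2 (Subtype.val_injective.comp r.injective)

theorem map_discSqrt [Fact (f.map (algebraMap F E)).Splits] [DecidableEq (f.rootSet E)]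
    (r : Fin m ≃ f.rootSet E) (φ : E ≃ₐ[F] E) :
    φ (discSqrt f r) =
      ((Equiv.Perm.sign (Gal.galActionHom f E (Gal.restrict f E φ)) : ℤ) : E) * discSqrt f r := by
  set σ := Gal.galActionHom f E (Gal.restrict f E φ)
  let π : Equiv.Perm (Fin m) := (r.trans σ).trans r.symm
  have hφ (x : f.rootSet E) : φ x = σ x := (Gal.galActionHom_restrict f E φ x).symm
  have hvand : φ.mapMatrix (Matrix.vandermonde fun i => (r i : E)) =
      (Matrix.vandermonde fun i => (r i : E)).submatrix π id := by
    ext i j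
    simp [Matrix.vandermonde_apply, π, hφ]
  rw [discSqrt, map_mul, map_pow, AlgEquiv.commutes, AlgEquiv.map_det, hvand, Matrix.det_permute,
    Equiv.Perm.sign_trans_trans_symm]
  ring

theorem range_galActionHom_le_alternatingGroup_iff [NeZero (2 : E)] [FiniteDimensional F E]
    [IsGalois F E] [Fact (f.map (algebraMap F E)).Splits] [DecidableEq (f.rootSet E)] (hf : f ≠ 0)
    (r : Fin m ≃ f.rootSet E) :
    (Gal.galActionHom f E).range ≤ alternatingGroup (f.rootSet E) ↔
      discSqrt f r ∈ (algebraMap F E).range := by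
  rw [← SetLike.mem_coe, RingHom.coe_range, IsGalois.mem_range_algebraMap_iff_fixed]
  constructor
  · intro hle φ
    have hsign := Equiv.Perm.mem_alternatingGroup.1 (hle ⟨Gal.restrict f E φ, rfl⟩)
    rw [map_discSqrt, hsign, Units.val_one, Int.cast_one, one_mul]
  · rintro hfix _ ⟨g, rfl⟩
    obtain ⟨φ, rfl⟩ := Gal.restrict_surjective f E g
    rw [Equiv.Perm.mem_alternatingGroup]
    refine (Int.units_eq_one_or _).resolve_right fun hsign => discSqrt_ne_zero hf r ?_
    have hneg : -discSqrt f r = discSqrt f r := by simpa [map_discSqrt, hsign] using hfix φ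
    refine (mul_eq_zero.1 ?_).resolve_left (two_ne_zero (α := E))
    rw [two_mul, ← eq_neg_iff_add_eq_zero, hneg]

end Discriminant

theorem mem_range_algebraMap_iff_exists_sq {F E : Type*} [Field F] [Field E] [Algebra F E] {x : E}
    (hx : x ≠ 0) :
    x ∈ (algebraMap F E).range ↔ ∃ q : F, q ≠ 0 ∧ x ^ 2 = algebraMap F E (q ^ 2) := by
  constructor
  · rintro ⟨q, rfl⟩
    exact ⟨q, by rintro rfl; simp at hx, (map_pow _ _ _).symm⟩
  · rintro ⟨q, -, hq⟩
    rw [map_pow, sq_eq_sq_iff_eq_or_eq_neg] at hq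
    obtain rfl | rfl := hq
    · exact ⟨q, rfl⟩
    · exact ⟨-q, map_neg _ _⟩

theorem exists_equiv_rootSet_eq_getD {F E : Type*} [Field F] [Field E] [Algebra F E] {f : F[X]}
    (hsep : f.Separable) (hsplit : (f.map (algebraMap F E)).Splits) :
    ∃ r : Fin f.natDegree ≃ f.rootSet E,
      ∀ i, (r i : E) = (f.map (algebraMap F E)).roots.toList.getD i 0 := by
  classical
  set l := (f.map (algebraMap F E)).roots.toList
  have hlen : l.length = f.natDegree := by
    rw [Multiset.length_toList, ← hsplit.natDegree_eq_card_roots, natDegree_map]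
  have hnodup : l.Nodup := by
    rw [← Multiset.coe_nodup, Multiset.coe_toList]
    exact nodup_roots hsep.map
  have hmem (x : E) : x ∈ l ↔ x ∈ f.rootSet E := by
    rw [Multiset.mem_toList, rootSet, mem_coe, Multiset.mem_toFinset, aroots_def]
  let r := (finCongr hlen.symm).trans
    ((hnodup.getEquiv l).trans (Equiv.subtypeEquivRight hmem))
  refine ⟨r, fun i => ?_⟩
  rw [List.getD_eq_getElem _ _ (hlen.symm ▸ i.2)]
  rfl

theorem polyDisc_eq_sq_discSqrt {f : ℚ[X]} {r : Fin f.natDegree ≃ f.rootSet f.SplittingField}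
    (hr : ∀ i, (r i : f.SplittingField) =
      (f.map (algebraMap ℚ f.SplittingField)).roots.toList.getD i 0) :
    polyDisc f = discSqrt f r ^ 2 := by
  rw [polyDisc, discSqrt, mul_pow, ← pow_mul, Matrix.det_vandermonde]
  congr 1
  · congr 1
    lia
  · simp_rw [← prod_pow, prod_range, Fin.val_fin_lt, ← hr, ← prod_filter,
      filter_lt_eq_Ioi, sub_sq_comm]

section GaloisGroup

variable {F E : Type*} [Field F] [Field E] [Algebra F E] {f : F[X]}
  [Fact (f.map (algebraMap F E)).Splits]

theorem isPretransitive_range_galActionHom (hf : Irreducible f) :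
    MulAction.IsPretransitive (Gal.galActionHom f E).range (f.rootSet E) := by
  have := Gal.galAction_isPretransitive f E hf
  refine ⟨fun x y => ?_⟩
  obtain ⟨g, hg⟩ := MulAction.exists_smul_eq f.Gal x y
  exact ⟨⟨Gal.galActionHom f E g, g, rfl⟩, hg⟩

theorem alternatingGroup_le_range_galActionHom [DecidableEq (f.rootSet E)] (hf : Irreducible f)
    (hsep : f.Separable) {p : ℕ} (hp : p.Prime) (hdeg : p + 3 ≤ f.natDegree)
    (hdeg' : f.natDegree < 2 * p) (hdvd : p ∣ Nat.card f.Gal) :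
    alternatingGroup (f.rootSet E) ≤ (Gal.galActionHom f E).range := by
  have hcard : Nat.card (f.rootSet E) = f.natDegree := by
    rw [Nat.card_eq_fintype_card, card_rootSet_eq_natDegree hsep Fact.out]
  have hgal : Nat.card (Gal.galActionHom f E).range = Nat.card f.Gal :=
    (Nat.card_congr (MonoidHom.ofInjective (Gal.galActionHom_injective f E)).toEquiv).symm
  exact alternatingGroup_le_of_isPretransitive_of_prime_dvd_card
    (isPretransitive_range_galActionHom hf) hp (hcard ▸ hdeg) (hcard ▸ hdeg') (hgal ▸ hdvd)

end GaloisGroup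

theorem exists_polyDisc_eq_sq_iff {f : ℚ[X]} [Fact (f.map (algebraMap ℚ f.SplittingField)).Splits]
    [DecidableEq (f.rootSet f.SplittingField)] (hf : Irreducible f) :
    (∃ q : ℚ, q ≠ 0 ∧ polyDisc f = algebraMap ℚ f.SplittingField (q ^ 2)) ↔
      (Gal.galActionHom f f.SplittingField).range ≤
        alternatingGroup (f.rootSet f.SplittingField) := by
  have : IsGalois ℚ f.SplittingField := isGalois_splittingField f
  obtain ⟨r, hr⟩ := exists_equiv_rootSet_eq_getD hf.separable
    (Fact.out : (f.map (algebraMap ℚ f.SplittingField)).Splits)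
  rw [polyDisc_eq_sq_discSqrt hr, range_galActionHom_le_alternatingGroup_iff hf.ne_zero r,
    mem_range_algebraMap_iff_exists_sq (discSqrt_ne_zero hf.ne_zero r)]

theorem prime_dvd_natCard_gal_sum_choose {m p : ℕ} (hp : p.Prime) {c : ℕ → ℚ} (hpm : p ≤ m)
    (hm : m < 2 * p) (hint : ∀ j ≤ m, c j = 0 ∨ 0 ≤ padicValRat p (c j))
    (hzero : c 0 ≠ 0 ∧ padicValRat p (c 0) = 1)
    (hlow : ∀ j ≤ m - p, c j = 0 ∨ 1 ≤ padicValRat p (c j))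
    (hunit : c p ≠ 0 ∧ padicValRat p (c p) = 0) :
    p ∣ Nat.card (∑ j ∈ range (m + 1), C ((m.choose j : ℚ) * c j) * X ^ j).Gal := by
  have : Fact p.Prime := ⟨hp⟩
  have hval : Rat.padicValuation p (c 0) = WithZero.exp (-1) := padicValuation_eq_exp_iff.2 hzero
  have hedge := hasInitialEdge_sum_choose hpm hm
    (fun j hj => by simpa using padicValuation_le_exp_iff.2 (hint j hj)) hval
    (fun j hj => padicValuation_le_exp_iff.2 (hlow j hj))
    (by simpa using padicValuation_eq_exp_iff.2 hunit)
  refine hedge.dvd_natCard_gal ?_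
  rw [coeff_sum_choose, Nat.choose_zero_right, Nat.cast_one, one_mul, hval, WithZero.log_exp]
  exact isCoprime_one_right.neg_right

/-- Hajir's criterion: if `f(x) = ∑_{j=0}^m C(m,j) cⱼ xʲ ∈ ℚ[x]` is irreducible of degree `m`
and there is a prime `m/2 < p < m-2` with (i) `ν_p(cⱼ) ≥ 0` for all `j`, (ii) `ν_p(c₀) = 1`,
(iii) `ν_p(cⱼ) ≥ 1` for `0 ≤ j ≤ m - p`, (iv) `ν_p(c_p) = 0` (here `ν_p(0) = ∞`), then the
Galois group of `f` contains `A_m`; moreover it is `A_m` if the discriminant of `f` is the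
square of a nonzero rational, and `S_m` otherwise. -/
theorem gal_contains_alternating_of_newton_polygon (m : ℕ) (c : ℕ → ℚ) (f : Polynomial ℚ)
    (hf : f = ∑ j ∈ Finset.range (m + 1),
      Polynomial.C ((m.choose j : ℚ) * c j) * Polynomial.X ^ j)
    (hirr : Irreducible f) (hdeg : f.natDegree = m)
    (p : ℕ) (hp : p.Prime) (hp1 : m < 2 * p) (hp2 : p + 2 < m)
    (h1 : ∀ j ≤ m, c j = 0 ∨ 0 ≤ padicValRat p (c j))
    (h2 : c 0 ≠ 0 ∧ padicValRat p (c 0) = 1)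
    (h3 : ∀ j ≤ m - p, c j = 0 ∨ 1 ≤ padicValRat p (c j))
    (h4 : c p ≠ 0 ∧ padicValRat p (c p) = 0) :
    (∀ σ : Equiv.Perm (f.rootSet f.SplittingField),
        @Equiv.Perm.sign _ (Classical.decEq _) _ σ = 1 →
        σ ∈ (@Polynomial.Gal.galActionHom ℚ _ f f.SplittingField _ _
          ⟨Polynomial.SplittingField.splits f⟩).range) ∧
    ((∃ q : ℚ, q ≠ 0 ∧ polyDisc f = algebraMap ℚ f.SplittingField (q ^ 2)) →
        Nonempty (f.Gal ≃* alternatingGroup (Fin m))) ∧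
    (¬ (∃ q : ℚ, q ≠ 0 ∧ polyDisc f = algebraMap ℚ f.SplittingField (q ^ 2)) →
        Nonempty (f.Gal ≃* Equiv.Perm (Fin m))) := by
  classical
  subst hdeg
  have : Fact (f.map (algebraMap ℚ f.SplittingField)).Splits := ⟨SplittingField.splits f⟩
  have hdvd : p ∣ Nat.card f.Gal :=
    hf ▸ prime_dvd_natCard_gal_sum_choose hp (by lia) hp1 h1 h2 h3 h4
  have hAlt : alternatingGroup (f.rootSet f.SplittingField) ≤ _ :=
    alternatingGroup_le_range_galActionHom hirr hirr.separable hp hp2 hp1 hdvd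
  have hdisc := exists_polyDisc_eq_sq_iff hirr
  let e := MonoidHom.ofInjective (Gal.galActionHom_injective f f.SplittingField)
  obtain ⟨r, -⟩ := exists_equiv_rootSet_eq_getD hirr.separable (SplittingField.splits f)
  refine ⟨fun σ hσ => ?_, fun hsq => ?_, fun hsq => ?_⟩
  · exact hAlt (Equiv.Perm.mem_alternatingGroup.2 (by convert hσ))
  · have hrange := (hdisc.1 hsq).antisymm hAlt
    exact ⟨(e.trans (MulEquiv.subgroupCongr hrange)).trans (Equiv.altCongrHom r.symm)⟩
  · have hrange := eq_top_of_alternatingGroup_le hAlt (mt hdisc.2 hsq)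
    exact ⟨((e.trans (MulEquiv.subgroupCongr hrange)).trans Subgroup.topEquiv).trans
      r.symm.permCongrHom⟩
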